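/- For every n ≥ 0 and generic tuples ū=(u_1,…,u_n), v̄=(v_1,…,v_n) of complex parameters, the scalar product of Bethe vectors satisfies ⟨0|( t_{21}(ū) t_{12}(v̄) |0⟩ ) = Σ_{w̄ ⇒ {w̄_I, w̄_II}} λ_2(w̄_I)·λ_1(w̄_II)·K_n(ū | w̄_I + c)·\bar{K}_n(ū | w̄_II − c)·f(w̄_I, w̄_II), where w̄ = {ū, v̄} is the combined 2n-tuple and the sum runs over all partitions of w̄ into disjoint subtuples w̄_I, w̄_II with #w̄_I = #w̄_II = n. -/

import Mathlib

open scoped BigOperators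

noncomputable section

/-- The rational function `g(u,v) = c/(u-v)`. -/
def gC (c u v : ℂ) : ℂ := c / (u - v)

/-- The rational function `f(u,v) = (u-v+c)/(u-v)`. -/
def fC (c u v : ℂ) : ℂ := (u - v + c) / (u - v)

/-- The rational function `h(u,v) = (u-v+c)/c`. -/
def hC (c u v : ℂ) : ℂ := (u - v + c) / c

/-- A family of parameters is generic if all pairwise differences avoid `0, ±c, ±2c`. -/
def Generic (c : ℂ) {ι : Type*} (w : ι → ℂ) : Prop :=
  ∀ i j, i ≠ j → w i - w j ≠ 0 ∧ w i - w j ≠ c ∧ w i - w j ≠ -c ∧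
    w i - w j ≠ 2 * c ∧ w i - w j ≠ -2 * c

/-- The modified Izergin determinant `K^{(z)}(x̄|ȳ)`. -/
def KIz (c z : ℂ) {ι κ : Type*} [Fintype ι] [Fintype κ] [DecidableEq κ]
    (x : ι → ℂ) (y : κ → ℂ) : ℂ :=
  Matrix.det (Matrix.of fun j k : κ =>
    -z * (if j = k then 1 else 0) +
      (∏ i, fC c (x i) (y j)) * (∏ i ∈ Finset.univ.erase j, fC c (y j) (y i))
        / hC c (y j) (y k))

/-- The conjugated modified Izergin determinant: `c` is replaced by `-c`. -/
def KIzBar (c z : ℂ) {ι κ : Type*} [Fintype ι] [Fintype κ] [DecidableEq κ]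
    (x : ι → ℂ) (y : κ → ℂ) : ℂ :=
  KIz (-c) z x y

/-- Restriction of a tuple to a subtuple indexed by a `Finset`. -/
def restr {p : ℕ} (w : Fin p → ℂ) (s : Finset (Fin p)) : {x // x ∈ s} → ℂ :=
  fun i => w i.1

/-- Double product `f(w̄_s, w̄_t)` over two subtuples of a tuple. -/
def fSS (c : ℂ) {p : ℕ} (w : Fin p → ℂ) (s t : Finset (Fin p)) : ℂ :=
  ∏ i ∈ s, ∏ j ∈ t, fC c (w i) (w j)

/-- Ordered product of operators over a subtuple (the operators pairwise commute,
so the order is irrelevant). -/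
def opProd {V : Type*} [AddCommGroup V] [Module ℂ V] {p : ℕ}
    (op : ℂ → Module.End ℂ V) (w : Fin p → ℂ) (s : Finset (Fin p)) : Module.End ℂ V :=
  ((s.sort (· ≤ ·)).map (fun i => op (w i))).prod

/-- The index subsets of a partition of `Fin p` into three parts. -/
def parts {p : ℕ} (σ : Fin p → Fin 3) (k : Fin 3) : Finset (Fin p) :=
  Finset.univ.filter (fun i => σ i = k)

/-!
Acting with `t₂₁(x)` on a Bethe vector `t₁₂(w̄)|0⟩` replaces `x` and the parameters of the vector by
all choices of one argument of `λ₂`, one argument of `λ₁` and a shorter Bethe vector. Iterating, the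
terms of `t₂₁(ū) t₁₂(v̄)|0⟩` are labelled by partitions `w̄ ⇒ {w̄_I, w̄_J, w̄_K}` with
`#w̄_I = #w̄_J = #ū`, and their coefficients split off `f(w̄_I, w̄_J) f(w̄_I, w̄_K) f(w̄_K, w̄_J)`.
What remains is a factor depending on `I` and a factor depending on `J`, each solving the recursion
that removes one entry `x` of `ū` together with one entry of `w̄_I` (resp. `w̄_J`).

The Izergin determinants `K(ū | w̄_I + c)` and `K̄(ū | w̄_J - c)` satisfy this recursion: their
principal minors are Cauchy determinants, so they expand into sums over subsets of `w̄_I`, and on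
these sums the recursion is a partial fraction identity. It produces one additional term, which is a
determinant with more entries on the right than on the left and therefore vanishes.

The dual vacuum annihilates every nonempty Bethe vector, which leaves the partitions with
`w̄_K` empty.
-/

section Scalars

theorem fC_self (c x : ℂ) : fC c x x = 0 := by simp [fC]

theorem fC_neg (c x y : ℂ) : fC (-c) x y = fC c y x := by
  rw [fC, fC, ← neg_div_neg_eq]
  congr 1 <;> ring

theorem hC_neg (c x y : ℂ) : hC (-c) x y = hC c y x := by
  rw [hC, hC, ← neg_div_neg_eq]
  congr 1 <;> ring

theorem inv_fC (c x y : ℂ) : (fC c x y)⁻¹ = (x - y) / (x - y + c) := inv_div _ _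

theorem inv_hC (c x y : ℂ) : (hC c x y)⁻¹ = c / (x - y + c) := inv_div _ _

theorem fC_eq_one_add_gC (c : ℂ) {x y : ℂ} (h : x ≠ y) : fC c x y = 1 + gC c x y := by
  rw [fC, gC, add_div, div_self (sub_ne_zero.2 h)]

variable {ι κ : Type*} {c : ℂ} {w : ι → ℂ}

/-- The genericity that the argument needs: the parameters are distinct and no two of them differ
by `c`. Allowing `i = j` in the second condition makes it include `c ≠ 0`. -/
structure NonResonant (c : ℂ) (w : ι → ℂ) : Prop where
  injective : Function.Injective w
  sub_add_ne_zero : ∀ i j, w i - w j + c ≠ 0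

namespace NonResonant

theorem shift_ne_zero (h : NonResonant c w) (i : ι) : c ≠ 0 := by
  simpa using h.sub_add_ne_zero i i

theorem neg (h : NonResonant c w) : NonResonant (-c) w where
  injective := h.injective
  sub_add_ne_zero i j hij := h.sub_add_ne_zero j i (by linear_combination -hij)

theorem comp (h : NonResonant c w) {e : κ → ι} (he : Function.Injective e) :
    NonResonant c (w ∘ e) where
  injective := h.injective.comp he
  sub_add_ne_zero i j := h.sub_add_ne_zero (e i) (e j)

theorem sub_ne_zero (h : NonResonant c w) {i j : ι} (hij : i ≠ j) : w i - w j ≠ 0 :=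
  _root_.sub_ne_zero.2 (h.injective.ne hij)

theorem fC_ne_zero (h : NonResonant c w) {i j : ι} (hij : i ≠ j) : fC c (w i) (w j) ≠ 0 :=
  div_ne_zero (h.sub_add_ne_zero i j) (h.sub_ne_zero hij)

theorem inv_hC_sub_mul (h : NonResonant c w) (i j k : ι) :
    (hC c (w i) (w k))⁻¹ - (hC c (w i) (w j))⁻¹ * (hC c (w j) (w k))⁻¹
      = (fC c (w i) (w j))⁻¹ * ((fC c (w j) (w k))⁻¹ * (hC c (w i) (w k))⁻¹) := by
  have h₁ := h.sub_add_ne_zero i j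
  have h₂ := h.sub_add_ne_zero j k
  have h₃ := h.sub_add_ne_zero i k
  simp only [inv_hC, inv_fC]
  field_simp
  ring

end NonResonant

theorem Generic.nonResonant (h : Generic c w) (hc : c ≠ 0) : NonResonant c w where
  injective i j hij := by
    by_contra hne
    exact (h i j hne).1 (sub_eq_zero.2 hij)
  sub_add_ne_zero i j := by
    rcases eq_or_ne i j with rfl | hne
    · simpa using hc
    · exact fun h₀ => (h i j hne).2.2.1 (eq_neg_of_add_eq_zero_left h₀)

/-- The double product `f(w̄_S, w̄_T)` over two subfamilies. Since `fC c x x = 0` by the convention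
`x / 0 = 0`, it vanishes when `S` and `T` overlap. -/
def fProd (c : ℂ) (w : ι → ℂ) (S T : Finset ι) : ℂ :=
  ∏ i ∈ S, ∏ j ∈ T, fC c (w i) (w j)

theorem fProd_singleton_left (c : ℂ) (w : ι → ℂ) (i : ι) (T : Finset ι) :
    fProd c w {i} T = ∏ j ∈ T, fC c (w i) (w j) :=
  Finset.prod_singleton _ _

theorem fProd_singleton_right (c : ℂ) (w : ι → ℂ) (S : Finset ι) (j : ι) :
    fProd c w S {j} = ∏ i ∈ S, fC c (w i) (w j) := by
  simp only [fProd, Finset.prod_singleton]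

theorem fProd_empty_left (c : ℂ) (w : ι → ℂ) (T : Finset ι) : fProd c w ∅ T = 1 := rfl

theorem fProd_empty_right (c : ℂ) (w : ι → ℂ) (S : Finset ι) : fProd c w S ∅ = 1 := by
  simp [fProd]

theorem fProd_neg (c : ℂ) (w : ι → ℂ) (S T : Finset ι) : fProd (-c) w S T = fProd c w T S := by
  simp only [fProd, fC_neg]
  exact Finset.prod_comm

theorem fProd_eq_zero {i : ι} {S T : Finset ι} (hS : i ∈ S) (hT : i ∈ T) : fProd c w S T = 0 :=
  Finset.prod_eq_zero hS (Finset.prod_eq_zero hT (fC_self c (w i)))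

theorem NonResonant.fProd_ne_zero (h : NonResonant c w) {S T : Finset ι} (hST : Disjoint S T) :
    fProd c w S T ≠ 0 :=
  Finset.prod_ne_zero_iff.2 fun _ hi => Finset.prod_ne_zero_iff.2 fun _ hj =>
    h.fC_ne_zero (Finset.disjoint_left.1 hST hi <| · ▸ hj)

variable [DecidableEq ι]

theorem fProd_insert_left {i : ι} {S : Finset ι} (hi : i ∉ S) (T : Finset ι) :
    fProd c w (insert i S) T = fProd c w {i} T * fProd c w S T := by
  rw [fProd_singleton_left, fProd, Finset.prod_insert hi, fProd]

theorem fProd_insert_right {j : ι} (S : Finset ι) {T : Finset ι} (hj : j ∉ T) :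
    fProd c w S (insert j T) = fProd c w S {j} * fProd c w S T := by
  rw [← fProd_neg, fProd_insert_left hj, fProd_neg, fProd_neg]

theorem prod_fC_eq_one_add_sum (hw : Function.Injective w) (c : ℂ) (B : Finset ι) (z : ℂ)
    (hz : ∀ i ∈ B, w i ≠ z) :
    ∏ k ∈ B, fC c (w k) z
      = 1 + ∑ i ∈ B, gC c (w i) z * ∏ k ∈ B.erase i, fC c (w k) (w i) := by
  induction B using Finset.induction_on generalizing z with
  | empty => simp
  | insert b B hb ih =>
    obtain ⟨hbz, hBz⟩ := Finset.forall_mem_insert .. |>.1 hz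
    have hne : ∀ i ∈ B, w i ≠ w b := fun i hi => hw.ne (ne_of_mem_of_not_mem hi hb)
    have hterm : ∀ i ∈ B, gC c (w i) z * ∏ k ∈ (insert b B).erase i, fC c (w k) (w i)
        = (1 + gC c (w b) z) * (gC c (w i) z * ∏ k ∈ B.erase i, fC c (w k) (w i))
          - gC c (w b) z * (gC c (w i) (w b) * ∏ k ∈ B.erase i, fC c (w k) (w i)) := by
      intro i hi
      have hres : gC c (w i) z * fC c (w b) (w i)
          = (1 + gC c (w b) z) * gC c (w i) z - gC c (w b) z * gC c (w i) (w b) := by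
        have h₁ := sub_ne_zero.2 (hBz i hi)
        have h₂ := sub_ne_zero.2 hbz
        have h₃ := sub_ne_zero.2 (hne i hi)
        rw [fC_eq_one_add_gC c (hne i hi).symm, gC, gC, gC, gC, ← neg_sub (w i) (w b)]
        field_simp
        ring
      rw [Finset.erase_insert_of_ne (ne_of_mem_of_not_mem hi hb).symm,
        Finset.prod_insert (fun h => hb (Finset.mem_of_mem_erase h))]
      linear_combination (∏ k ∈ B.erase i, fC c (w k) (w i)) * hres
    rw [Finset.prod_insert hb, Finset.sum_insert hb, Finset.erase_insert hb,
      Finset.sum_congr rfl hterm, Finset.sum_sub_distrib, ← Finset.mul_sum, ← Finset.mul_sum,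
      fC_eq_one_add_gC c hbz]
    linear_combination (1 + gC c (w b) z) * ih z hBz - gC c (w b) z * ih (w b) hne

theorem NonResonant.sum_fProd_erase_div (h : NonResonant c w) (B : Finset ι) (x : ι) :
    ∑ i ∈ B, fProd c w (B.erase i) {i} / fProd c w (B.erase i) {x} * (hC c (w i) (w x))⁻¹
      = 1 - (fProd c w B {x})⁻¹ := by
  by_cases hx : x ∈ B
  · rw [fProd_eq_zero hx (Finset.mem_singleton_self x), Finset.sum_eq_single_of_mem x hx]
    · rw [div_self (h.fProd_ne_zero (by simp)), inv_hC]
      simp [h.shift_ne_zero x]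
    · intro i _ hi
      rw [fProd_eq_zero (Finset.mem_erase.2 ⟨hi.symm, hx⟩) (Finset.mem_singleton_self x)]
      simp
  · have hB : fProd c w B {x} ≠ 0 := h.fProd_ne_zero (by simpa using hx)
    have hterm : ∀ i ∈ B,
        fProd c w (B.erase i) {i} / fProd c w (B.erase i) {x} * (hC c (w i) (w x))⁻¹
          = (fProd c w B {x})⁻¹ * (gC c (w i) (w x) * fProd c w (B.erase i) {i}) := by
      intro i hi
      have hix := ne_of_mem_of_not_mem hi hx
      have h₁ := h.sub_ne_zero hix
      have h₂ := h.sub_add_ne_zero i x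
      have h₃ : fProd c w (B.erase i) {x} ≠ 0 :=
        h.fProd_ne_zero (by simpa using fun _ => hx)
      rw [← Finset.insert_erase hi, fProd_insert_left (Finset.notMem_erase i B),
        Finset.insert_erase hi, fProd_singleton_left, Finset.prod_singleton, inv_hC, fC, gC]
      field_simp
    have hpf := prod_fC_eq_one_add_sum h.injective c B (w x) fun i hi =>
      h.injective.ne (ne_of_mem_of_not_mem hi hx)
    simp only [← fProd_singleton_right] at hpf
    rw [Finset.sum_congr rfl hterm, ← Finset.mul_sum]
    linear_combination inv_mul_cancel₀ hB - (fProd c w B {x})⁻¹ * hpf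

end Scalars

section Determinants

open Matrix

theorem det_diagonal_add {R κ : Type*} [CommRing R] [Fintype κ] [DecidableEq κ] (d : κ → R)
    (N : Matrix κ κ R) :
    (diagonal d + N).det
      = ∑ A : Finset κ, (∏ i ∈ Aᶜ, d i) * (N.submatrix (↑) (↑) : Matrix A A R).det := by
  have hrow (A : Finset κ) : A.piecewise N.row (diagonal d).row
      = fun i => (if i ∈ A then 1 else d i) • A.piecewise N.row (1 : Matrix κ κ R).row i := by
    ext i j
    by_cases hi : i ∈ A <;> simp [hi, diagonal_apply, one_apply]
  have hminor (A : Finset κ) : detRowAlternating (A.piecewise N.row (1 : Matrix κ κ R).row)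
      = (N.submatrix (↑) (↑) : Matrix A A R).det := det_piecewise_one_eq_submatrix_det N A
  rw [add_comm]
  refine (detRowAlternating.map_add_univ N.row (diagonal d).row).trans
    (Finset.sum_congr rfl fun A _ => ?_)
  rw [hrow, AlternatingMap.map_smul_univ, hminor, Finset.prod_ite, Finset.prod_const_one, one_mul,
    Finset.filter_notMem_eq_sdiff, Finset.compl_eq_univ_sdiff, smul_eq_mul]

variable {ι κ : Type*} [DecidableEq ι] [DecidableEq κ] {c : ℂ} {w : ι → ℂ}

theorem NonResonant.det_inv_hC (h : NonResonant c w) (A : Finset ι) :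
    (of fun j k : A => (hC c (w j) (w k))⁻¹).det
      = ∏ j ∈ A, ∏ k ∈ A.erase j, (fC c (w j) (w k))⁻¹ := by
  induction A using Finset.induction_on with
  | empty => simp
  | insert x A hx ih =>
    let e : Unit ⊕ A ≃ ↥(insert x A) := ((Equiv.sumComm _ _).trans
      (Equiv.optionEquivSumPUnit A).symm).trans (Finset.subtypeInsertEquivOption hx).symm
    have hblock : (of fun j k : ↥(insert x A) => (hC c (w j) (w k))⁻¹).submatrix e e
        = fromBlocks 1 (of fun _ (k : A) => (hC c (w x) (w k))⁻¹)
          (of fun (j : A) _ => (hC c (w j) (w x))⁻¹)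
          (of fun j k : A => (hC c (w j) (w k))⁻¹) := by
      ext (i | i) (j | j) <;>
        simp [e, Finset.subtypeInsertEquivOption, hC, h.shift_ne_zero x]
    have hschur : (of fun j k : A => (hC c (w j) (w k))⁻¹)
          - (of fun (j : A) (_ : Unit) => (hC c (w j) (w x))⁻¹) *
            (of fun (_ : Unit) (k : A) => (hC c (w x) (w k))⁻¹)
        = of fun j k : A => (fC c (w j) (w x))⁻¹ *
          (of fun j k : A => (fC c (w x) (w k))⁻¹ *
            (of fun j k : A => (hC c (w j) (w k))⁻¹) j k) j k := by
      ext j k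
      simpa [Matrix.mul_apply] using h.inv_hC_sub_mul j x k
    have hprod : ∏ j ∈ A, ∏ k ∈ (insert x A).erase j, (fC c (w j) (w k))⁻¹
        = (∏ j ∈ A, (fC c (w j) (w x))⁻¹) * ∏ j ∈ A, ∏ k ∈ A.erase j, (fC c (w j) (w k))⁻¹ := by
      rw [← Finset.prod_mul_distrib]
      refine Finset.prod_congr rfl fun j hj => ?_
      rw [Finset.erase_insert_of_ne (ne_of_mem_of_not_mem hj hx).symm,
        Finset.prod_insert fun hmem => hx (Finset.mem_of_mem_erase hmem)]
    rw [← det_submatrix_equiv_self e, hblock, det_fromBlocks_one₁₁, hschur, det_mul_column,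
      det_mul_row, ih, Finset.prod_insert hx, Finset.erase_insert hx, hprod,
      Finset.prod_coe_sort A fun j => (fC c (w j) (w x))⁻¹,
      Finset.prod_coe_sort A fun k => (fC c (w x) (w k))⁻¹]
    ring

/-- The expansion of the Izergin determinant in principal minors, with weights `a j` in place of
the products `f(ū, y_j)`; the minors are Cauchy determinants, see `det_eq_minorSum`. -/
def minorSum (c : ℂ) (w : ι → ℂ) (a : ι → ℂ) (I : Finset ι) : ℂ :=
  ∑ A ∈ I.powerset, (-1) ^ (I \ A).card * fProd c w A (I \ A) * ∏ j ∈ A, a j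

theorem minorSum_map (c : ℂ) (w a : ι → ℂ) (e : κ ↪ ι) (I : Finset κ) :
    minorSum c w a (I.map e) = minorSum c (w ∘ e) (a ∘ e) I := by
  rw [minorSum, Finset.map_eq_image, Finset.powerset_image, Finset.sum_image fun _ _ _ _ h =>
    Finset.image_injective e.injective h, minorSum]
  refine Finset.sum_congr rfl fun A _ => ?_
  simp only [← Finset.map_eq_image, ← Finset.map_sdiff, Finset.card_map, fProd, Finset.prod_map,
    Function.comp_apply]

theorem minorSum_eq_univ (c : ℂ) (w a : ι → ℂ) (I : Finset ι) :
    minorSum c w a I = minorSum c (w ∘ (↑)) (a ∘ (↑)) (Finset.univ : Finset I) := by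
  conv_lhs => rw [← Finset.attach_map_val (s := I), minorSum_map]
  rfl

theorem minorSum_empty (c : ℂ) (w a : ι → ℂ) : minorSum c w a ∅ = 1 := by
  simp [minorSum, fProd]

theorem NonResonant.det_eq_minorSum [Fintype ι] (h : NonResonant c w) (a : ι → ℂ) :
    (of fun j k : ι => -1 * (if j = k then 1 else 0)
      + a j * (∏ i ∈ Finset.univ.erase j, fC c (w j) (w i)) / hC c (w j) (w k)).det
      = minorSum c w a Finset.univ := by
  have hsplit : (of fun j k : ι => -1 * (if j = k then 1 else 0)
      + a j * (∏ i ∈ Finset.univ.erase j, fC c (w j) (w i)) / hC c (w j) (w k))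
      = diagonal (fun _ => -1) + of fun j k =>
        (a j * ∏ i ∈ Finset.univ.erase j, fC c (w j) (w i)) *
          (of fun j k => (hC c (w j) (w k))⁻¹) j k := by
    ext j k
    by_cases hjk : j = k <;> simp [hjk, div_eq_mul_inv]
  rw [hsplit, det_diagonal_add, minorSum, Finset.powerset_univ]
  refine Finset.sum_congr rfl fun A _ => ?_
  have hminor : ((of fun j k => (a j * ∏ i ∈ Finset.univ.erase j, fC c (w j) (w i)) *
        (of fun j k => (hC c (w j) (w k))⁻¹) j k).submatrix (↑) (↑) : Matrix A A ℂ).det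
      = (∏ j ∈ A, (a j * ∏ i ∈ Finset.univ.erase j, fC c (w j) (w i))) *
        ∏ j ∈ A, ∏ k ∈ A.erase j, (fC c (w j) (w k))⁻¹ := by
    rw [← h.det_inv_hC, ← Finset.prod_coe_sort A]
    exact det_mul_column _ _
  have hrow : ∀ j ∈ A, (∏ i ∈ Finset.univ.erase j, fC c (w j) (w i)) *
      ∏ k ∈ A.erase j, (fC c (w j) (w k))⁻¹ = ∏ k ∈ Aᶜ, fC c (w j) (w k) := by
    intro j hj
    have hne : ∏ k ∈ A.erase j, fC c (w j) (w k) ≠ 0 :=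
      Finset.prod_ne_zero_iff.2 fun k hk => h.fC_ne_zero (Finset.ne_of_mem_erase hk).symm
    have hsdiff : Finset.univ.erase j \ A.erase j = Aᶜ := by
      ext k
      by_cases hk : k = j <;> simp [hk, hj]
    rw [Finset.prod_inv_distrib, ← div_eq_mul_inv, div_eq_iff hne, ← hsdiff,
      Finset.prod_sdiff (Finset.erase_subset_erase j (Finset.subset_univ A))]
  rw [hminor, Finset.prod_const, ← Finset.compl_eq_univ_sdiff, Finset.prod_mul_distrib, mul_assoc,
    mul_assoc, ← Finset.prod_mul_distrib, Finset.prod_congr rfl hrow, mul_comm (∏ j ∈ A, a j),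
    fProd]

end Determinants

section Izergin

variable {ι : Type*} [DecidableEq ι] {c : ℂ} {w : ι → ℂ}

open Matrix in
theorem NonResonant.minorSum_one_univ_eq_zero [Fintype ι] [Nonempty ι] (h : NonResonant c w) :
    minorSum c w 1 Finset.univ = 0 := by
  -- The rows of the determinant add up to zero, by partial fractions at the zero `w k - c` of `f`.
  have hcol (k : ι) :
      ∑ j, (∏ i ∈ Finset.univ.erase j, fC c (w j) (w i)) / hC c (w j) (w k) = 1 := by
    have hpf := prod_fC_eq_one_add_sum h.injective (-c) Finset.univ (w k - c) fun i _ hi =>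
      h.sub_add_ne_zero i k (by linear_combination hi)
    have hzero : fC (-c) (w k) (w k - c) = 0 := by simp [fC]
    rw [Finset.prod_eq_zero (Finset.mem_univ k) hzero] at hpf
    have hgC (j : ι) : gC (-c) (w j) (w k - c) = -(hC c (w j) (w k))⁻¹ := by
      rw [gC, inv_hC, sub_sub_eq_add_sub, add_sub_right_comm, neg_div]
    simp only [hgC, fC_neg, neg_mul, Finset.sum_neg_distrib] at hpf
    simp only [div_eq_inv_mul]
    linear_combination hpf
  rw [← h.det_eq_minorSum, ← exists_vecMul_eq_zero_iff]
  refine ⟨1, one_ne_zero, funext fun k => ?_⟩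
  simp [vecMul, dotProduct, Finset.sum_add_distrib, hcol]

theorem NonResonant.minorSum_one_eq_zero (h : NonResonant c w) {I : Finset ι}
    (hI : I.Nonempty) : minorSum c w 1 I = 0 := by
  have := hI.to_subtype
  rw [minorSum_eq_univ]
  exact (h.comp Subtype.val_injective).minorSum_one_univ_eq_zero

theorem sum_powerset_sum_sdiff {M : Type*} [AddCommMonoid M] (I : Finset ι)
    (F : Finset ι → ι → M) :
    ∑ A ∈ I.powerset, ∑ i ∈ I \ A, F A i = ∑ i ∈ I, ∑ A ∈ (I.erase i).powerset, F A i :=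
  Finset.sum_comm' fun A i => by
    simp only [Finset.mem_powerset, Finset.mem_sdiff, Finset.subset_erase]
    tauto

/-- The coefficient with which the parameter `w i` is removed from an Izergin determinant together
with `w x`. It vanishes for `x ∈ I \ {i}`, where `fProd c w (I.erase i) {x} = 0`. -/
def peelCoeff (c : ℂ) (w : ι → ℂ) (x : ι) (I : Finset ι) (i : ι) : ℂ :=
  -(fProd c w (I.erase i) {i} / fProd c w (I.erase i) {x} * (hC c (w i) (w x))⁻¹)

theorem NonResonant.minorSum_mul_inv_fC (h : NonResonant c w) (a : ι → ℂ) (x : ι)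
    (I : Finset ι) :
    minorSum c w (fun j => (fC c (w j) (w x))⁻¹ * a j) I
      = (fProd c w I {x})⁻¹ * minorSum c w a I
        + ∑ i ∈ I, peelCoeff c w x I i * minorSum c w a (I.erase i) := by
  have hpeel : ∀ i ∈ I, ∀ A ∈ (I.erase i).powerset,
      peelCoeff c w x I i *
        ((-1) ^ (I.erase i \ A).card * fProd c w A (I.erase i \ A) * ∏ j ∈ A, a j)
      = (-1) ^ (I \ A).card * fProd c w A (I \ A) * (∏ j ∈ A, (fC c (w j) (w x))⁻¹ * a j) *
        (fProd c w ((I \ A).erase i) {i} / fProd c w ((I \ A).erase i) {x} *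
          (hC c (w i) (w x))⁻¹) := by
    intro i hi A hA
    have hiA := (Finset.subset_erase.1 (Finset.mem_powerset.1 hA)).2
    have hsdiff : I \ A = insert i (I.erase i \ A) := by
      rw [Finset.erase_sdiff_comm, Finset.insert_erase (Finset.mem_sdiff.2 ⟨hi, hiA⟩)]
    have herase (z : ι) : fProd c w (I.erase i) {z}
        = fProd c w (I.erase i \ A) {z} * fProd c w A {z} := by
      simp only [fProd_singleton_right, Finset.prod_sdiff (Finset.mem_powerset.1 hA)]
    have hni : i ∉ I.erase i \ A := by simp
    rw [peelCoeff, herase, herase, hsdiff, Finset.card_insert_of_notMem hni,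
      fProd_insert_right _ hni, Finset.erase_insert hni, Finset.prod_mul_distrib,
      Finset.prod_inv_distrib, fProd_singleton_right c w A x]
    ring
  simp only [minorSum, Finset.mul_sum]
  rw [Finset.sum_congr rfl fun i hi => Finset.sum_congr rfl (hpeel i hi),
    ← sum_powerset_sum_sdiff, ← Finset.sum_add_distrib]
  refine Finset.sum_congr rfl fun A hA => ?_
  rw [← Finset.mul_sum, h.sum_fProd_erase_div, Finset.prod_mul_distrib, Finset.prod_inv_distrib,
    ← fProd_singleton_right, fProd_singleton_right c w I,
    ← Finset.prod_sdiff (Finset.mem_powerset.1 hA), ← fProd_singleton_right,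
    ← fProd_singleton_right]
  ring

/-- The Izergin determinant `K(w̄_U | w̄_I + c)`, in expanded form; see `KIz_eq_izergin`. -/
def izergin (c : ℂ) (w : ι → ℂ) (U I : Finset ι) : ℂ :=
  minorSum c w (fun j => (fProd c w {j} U)⁻¹) I

theorem izergin_empty (c : ℂ) (w : ι → ℂ) : izergin c w ∅ ∅ = 1 :=
  minorSum_empty _ _ _

theorem NonResonant.izergin_insert_eq_add (h : NonResonant c w) {U : Finset ι} {x : ι}
    (hx : x ∉ U) (I : Finset ι) :
    izergin c w (insert x U) I = (fProd c w I {x})⁻¹ * izergin c w U I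
      + ∑ i ∈ I, peelCoeff c w x I i * izergin c w U (I.erase i) := by
  simp only [izergin]
  rw [← h.minorSum_mul_inv_fC]
  simp only [fProd_insert_right _ hx, mul_inv, fProd_singleton_right, Finset.prod_singleton]

theorem NonResonant.izergin_eq_zero (h : NonResonant c w) {U I : Finset ι}
    (hUI : U.card < I.card) : izergin c w U I = 0 := by
  induction U using Finset.induction_on generalizing I with
  | empty =>
    have hone : (fun j => (fProd c w {j} ∅)⁻¹) = 1 :=
      funext fun j => by rw [fProd_empty_right, inv_one, Pi.one_apply]
    rw [izergin, hone]
    exact h.minorSum_one_eq_zero (Finset.card_pos.1 hUI)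
  | insert x U hx ih =>
    rw [Finset.card_insert_of_notMem hx] at hUI
    rw [h.izergin_insert_eq_add hx, ih (by lia), mul_zero, zero_add]
    refine Finset.sum_eq_zero fun i hi => ?_
    rw [ih (by rw [Finset.card_erase_of_mem hi]; lia), mul_zero]

theorem NonResonant.izergin_insert (h : NonResonant c w) {U I : Finset ι} {x : ι} (hx : x ∉ U)
    (hI : I.card = U.card + 1) :
    izergin c w (insert x U) I = ∑ i ∈ I, peelCoeff c w x I i * izergin c w U (I.erase i) := by
  rw [h.izergin_insert_eq_add hx, h.izergin_eq_zero (by lia), mul_zero, zero_add]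

theorem NonResonant.KIz_eq_izergin {κ : Type*} [Fintype κ] (h : NonResonant c w) (e : κ ↪ ι)
    (s : Finset ι) :
    KIz c 1 (w ∘ e) (fun i : s => w i + c) = izergin c w (Finset.univ.map e) s := by
  have hinv (x y : ℂ) : fC c x (y + c) = (fC c y x)⁻¹ := by
    rw [inv_fC, fC, ← neg_div_neg_eq]
    congr 1 <;> ring
  have hf (x y : ℂ) : fC c (x + c) (y + c) = fC c x y := by
    rw [fC, fC, add_sub_add_right_eq_sub]
  have hh (x y : ℂ) : hC c (x + c) (y + c) = hC c x y := by
    rw [hC, hC, add_sub_add_right_eq_sub]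
  have hdet := (h.comp (Subtype.val_injective (p := (· ∈ s)))).det_eq_minorSum
    fun j => (fProd c w {j.1} (Finset.univ.map e))⁻¹
  rw [izergin, minorSum_eq_univ]
  refine Eq.trans ?_ hdet
  simp only [KIz, hf, hh]
  simp only [hinv, Finset.prod_inv_distrib, fProd_singleton_left, Finset.prod_map,
    Function.comp_apply]

end Izergin

section Operators

variable {V : Type*} [AddCommGroup V] [Module ℂ V] {p : ℕ}

theorem opProd_eq_noncommProd {op : ℂ → Module.End ℂ V} (hop : ∀ x y, Commute (op x) (op y))
    (w : Fin p → ℂ) (S : Finset (Fin p)) :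
    opProd op w S = S.noncommProd (fun i => op (w i)) fun _ _ _ _ _ => hop _ _ := by
  simp only [opProd, Finset.noncommProd, ← Finset.sort_eq S (· ≤ ·), Multiset.map_coe,
    Multiset.noncommProd_coe]

theorem opProd_empty (op : ℂ → Module.End ℂ V) (w : Fin p → ℂ) : opProd op w ∅ = 1 := by
  simp [opProd]

theorem opProd_insert {op : ℂ → Module.End ℂ V} (hop : ∀ x y, Commute (op x) (op y))
    (w : Fin p → ℂ) {i : Fin p} {S : Finset (Fin p)} (hi : i ∉ S) :
    opProd op w (insert i S) = op (w i) * opProd op w S := by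
  rw [opProd_eq_noncommProd hop, opProd_eq_noncommProd hop]
  exact Finset.noncommProd_insert_of_notMem _ _ _ _ hi

theorem opProd_map {m : ℕ} {op : ℂ → Module.End ℂ V} (hop : ∀ x y, Commute (op x) (op y))
    (w : Fin p → ℂ) (e : Fin m ↪ Fin p) (S : Finset (Fin m)) :
    opProd op w (S.map e) = opProd op (w ∘ e) S := by
  induction S using Finset.induction_on with
  | empty => simp only [Finset.map_empty, opProd_empty]
  | insert i S hi ih =>
    rw [Finset.map_insert, opProd_insert hop w (by simpa using hi), ih, opProd_insert hop _ hi,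
      Function.comp_apply]

/-- `T` satisfies the Yangian relations of `gl₂` and `vac` is a highest weight vector with
eigenvalues `lam1`, `lam2`. The indices `1, 2` of `t_{ij}` are encoded as `0, 1 : Fin 2`. -/
structure IsHighestWeight (c : ℂ) (T : Fin 2 → Fin 2 → ℂ → Module.End ℂ V) (vac : V)
    (lam1 lam2 : ℂ → ℂ) : Prop where
  commutator : ∀ i j k l x y, x ≠ y → T i j x * T k l y - T k l y * T i j x
    = gC c x y • (T k j y * T i l x - T k j x * T i l y)
  commute : ∀ i j x y, Commute (T i j x) (T i j y)
  t00_vac : ∀ x, T 0 0 x vac = lam1 x • vac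
  t11_vac : ∀ x, T 1 1 x vac = lam2 x • vac
  t10_vac : ∀ x, T 1 0 x vac = 0

variable {c : ℂ} {T : Fin 2 → Fin 2 → ℂ → Module.End ℂ V} {vac : V} {lam1 lam2 : ℂ → ℂ}
  {w : Fin p → ℂ}

namespace IsHighestWeight

theorem antitranspose (hT : IsHighestWeight c T vac lam1 lam2) :
    IsHighestWeight (-c) (fun i j => T j.rev i.rev) vac lam2 lam1 where
  commutator i j k l x y hxy := by
    have hrel := hT.commutator l.rev k.rev j.rev i.rev y x hxy.symm
    have hg : gC (-c) x y = gC c y x := by rw [gC, gC, ← neg_div_neg_eq, neg_neg, neg_sub]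
    rw [hg, ← neg_sub, hrel, ← smul_neg, neg_sub]
  commute i j := hT.commute j.rev i.rev
  t00_vac := hT.t11_vac
  t11_vac := hT.t00_vac
  t10_vac := hT.t10_vac

theorem t00_mul_t01 (hT : IsHighestWeight c T vac lam1 lam2) {x y : ℂ} (hxy : x ≠ y) :
    T 0 0 x * T 0 1 y = fC c y x • (T 0 1 y * T 0 0 x) + gC c x y • (T 0 1 x * T 0 0 y) := by
  have hrel := hT.commutator 0 1 0 0 y x hxy.symm
  have hg : gC c x y = -gC c y x := by rw [gC, gC, ← neg_sub y x, div_neg]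
  rw [fC_eq_one_add_gC c hxy.symm, hg, ← sub_eq_zero, ← sub_eq_zero.2 hrel.symm]
  module

theorem t10_mul_t01 (hT : IsHighestWeight c T vac lam1 lam2) {x y : ℂ} (hxy : x ≠ y) :
    T 1 0 x * T 0 1 y
      = T 0 1 y * T 1 0 x + gC c x y • (T 0 0 y * T 1 1 x - T 0 0 x * T 1 1 y) :=
  sub_eq_iff_eq_add'.1 (hT.commutator 1 0 0 1 x y hxy)

end IsHighestWeight

/-- The Bethe vector `t₁₂(w̄_S)|0⟩`. -/
def betheVector (T : Fin 2 → Fin 2 → ℂ → Module.End ℂ V) (vac : V) (w : Fin p → ℂ)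
    (S : Finset (Fin p)) : V :=
  opProd (T 0 1) w S vac

/-- The coefficient with which `t₁₁(w u)` replaces `w j` by `w u` in the Bethe vector of
`X \ {u}`; the one for `t₂₂` is obtained by replacing `c` by `-c`. -/
def exchangeCoeff {ι : Type*} [DecidableEq ι] (c : ℂ) (w : ι → ℂ) (X : Finset ι) (u j : ι) : ℂ :=
  fProd c w (X.erase j) {j} * (hC c (w u) (w j))⁻¹

theorem betheVector_empty (T : Fin 2 → Fin 2 → ℂ → Module.End ℂ V) (vac : V) (w : Fin p → ℂ) :
    betheVector T vac w ∅ = vac := by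
  rw [betheVector, opProd_empty, Module.End.one_apply]

theorem NonResonant.exchangeCoeff_erase {ι : Type*} [DecidableEq ι] {w : ι → ℂ}
    (h : NonResonant c w) {X : Finset ι} {v j : ι} (hv : v ∈ X) (hvj : v ≠ j) (u : ι) :
    exchangeCoeff c w (X.erase v) u j = exchangeCoeff c w X u j * (fC c (w v) (w j))⁻¹ := by
  have hne := h.fC_ne_zero hvj
  have hsplit : fProd c w (X.erase j) {j}
      = fC c (w v) (w j) * fProd c w ((X.erase v).erase j) {j} := by
    rw [fProd_singleton_right, fProd_singleton_right, Finset.erase_right_comm,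
      Finset.mul_prod_erase _ (fun i => fC c (w i) (w j)) (Finset.mem_erase.2 ⟨hvj, hv⟩)]
  rw [exchangeCoeff, exchangeCoeff, hsplit]
  field_simp

namespace IsHighestWeight

theorem t01_betheVector_erase (hT : IsHighestWeight c T vac lam1 lam2) {S : Finset (Fin p)}
    {i : Fin p} (hi : i ∈ S) :
    T 0 1 (w i) (betheVector T vac w (S.erase i)) = betheVector T vac w S := by
  rw [betheVector, betheVector, ← Module.End.mul_apply,
    ← opProd_insert (hT.commute 0 1) w (Finset.notMem_erase i S), Finset.insert_erase hi]

theorem t01_sum_betheVector (hT : IsHighestWeight c T vac lam1 lam2) {S : Finset (Fin p)}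
    {v : Fin p} (hv : v ∈ S) {a : Fin p → ℂ} (ha : a v = 0) :
    T 0 1 (w v) (∑ j ∈ S.erase v, a j • betheVector T vac w ((S.erase v).erase j))
      = ∑ j ∈ S, a j • betheVector T vac w (S.erase j) := by
  rw [map_sum, ← Finset.sum_erase S (a := v) (by rw [ha, zero_smul])]
  refine Finset.sum_congr rfl fun j hj => ?_
  rw [map_smul, Finset.erase_right_comm, hT.t01_betheVector_erase
    (Finset.mem_erase.2 ⟨(Finset.ne_of_mem_erase hj).symm, hv⟩)]

theorem t00_betheVector (hT : IsHighestWeight c T vac lam1 lam2) (h : NonResonant c w)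
    {X : Finset (Fin p)} {u : Fin p} (hu : u ∈ X) :
    T 0 0 (w u) (betheVector T vac w (X.erase u))
      = ∑ j ∈ X, (lam1 (w j) * exchangeCoeff c w X u j) • betheVector T vac w (X.erase j) := by
  induction X using Finset.strongInduction generalizing u with
  | H X ih =>
  rcases (X.erase u).eq_empty_or_nonempty with hX | ⟨v, hv⟩
  · obtain rfl : X = {u} := by rw [← Finset.insert_erase hu, hX]; rfl
    simp [betheVector_empty, hT.t00_vac, exchangeCoeff, inv_hC, h.shift_ne_zero u, fProd]
  have hvX := Finset.mem_of_mem_erase hv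
  have hvu := Finset.ne_of_mem_erase hv
  have hmove {u v : Fin p} (hu : u ∈ X) (hv : v ∈ X) (huv : u ≠ v) :
      T 0 1 (w v) (T 0 0 (w u) (betheVector T vac w ((X.erase v).erase u)))
        = ∑ j ∈ X, (lam1 (w j) * (exchangeCoeff c w X u j * (fC c (w v) (w j))⁻¹)) •
          betheVector T vac w (X.erase j) := by
    rw [ih _ (Finset.erase_ssubset hv) (Finset.mem_erase.2 ⟨huv, hu⟩),
      ← hT.t01_sum_betheVector hv (by rw [fC_self, inv_zero, mul_zero, mul_zero])]
    congr 1
    refine Finset.sum_congr rfl fun j hj => ?_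
    rw [h.exchangeCoeff_erase hv (Finset.ne_of_mem_erase hj).symm]
  rw [← hT.t01_betheVector_erase hv, ← Module.End.mul_apply,
    hT.t00_mul_t01 (h.injective.ne hvu.symm), LinearMap.add_apply, LinearMap.smul_apply,
    LinearMap.smul_apply, Module.End.mul_apply, Module.End.mul_apply, hmove hvX hu hvu,
    Finset.erase_right_comm, hmove hu hvX hvu.symm, Finset.smul_sum, Finset.smul_sum,
    ← Finset.sum_add_distrib]
  refine Finset.sum_congr rfl fun j _ => ?_
  rw [smul_smul, smul_smul, ← add_smul]
  congr 1
  have h₁ := h.sub_add_ne_zero u j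
  have h₂ := h.sub_add_ne_zero v j
  have h₃ := h.sub_ne_zero hvu
  rw [exchangeCoeff, exchangeCoeff, inv_hC, inv_hC, inv_fC, inv_fC, fC, gC,
    ← neg_sub (w v) (w u)]
  field_simp
  ring

theorem t11_betheVector (hT : IsHighestWeight c T vac lam1 lam2) (h : NonResonant c w)
    {X : Finset (Fin p)} {u : Fin p} (hu : u ∈ X) :
    T 1 1 (w u) (betheVector T vac w (X.erase u))
      = ∑ j ∈ X, (lam2 (w j) * exchangeCoeff (-c) w X u j) • betheVector T vac w (X.erase j) :=
  hT.antitranspose.t00_betheVector h.neg hu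

theorem t00_t11_betheVector (hT : IsHighestWeight c T vac lam1 lam2) (h : NonResonant c w)
    {X : Finset (Fin p)} {u v : Fin p} (hu : u ∈ X) (hv : v ∈ X) (huv : u ≠ v) :
    T 0 0 (w v) (T 1 1 (w u) (betheVector T vac w ((X.erase u).erase v)))
      = ∑ i ∈ X, ∑ j ∈ X.erase i,
        (lam2 (w i) * lam1 (w j) * (exchangeCoeff (-c) w X u i * (fC (-c) (w v) (w i))⁻¹) *
          exchangeCoeff c w (X.erase i) v j) • betheVector T vac w ((X.erase i).erase j) := by
  rw [Finset.erase_right_comm, hT.t11_betheVector h (Finset.mem_erase.2 ⟨huv, hu⟩), map_sum,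
    ← Finset.sum_erase X (a := v) (by simp [fC_self])]
  refine Finset.sum_congr rfl fun i hi => ?_
  have hvi := (Finset.ne_of_mem_erase hi).symm
  rw [map_smul, h.neg.exchangeCoeff_erase hv hvi, Finset.erase_right_comm,
    hT.t00_betheVector h (Finset.mem_erase.2 ⟨hvi, hv⟩), Finset.smul_sum]
  refine Finset.sum_congr rfl fun j _ => ?_
  rw [smul_smul]
  congr 1
  ring

theorem t01_sum_sum_betheVector (hT : IsHighestWeight c T vac lam1 lam2) (h : NonResonant c w)
    {X : Finset (Fin p)} {v : Fin p} (hv : v ∈ X) (u : Fin p) :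
    T 0 1 (w v) (∑ i ∈ X.erase v, ∑ j ∈ (X.erase v).erase i,
        (lam2 (w i) * lam1 (w j) * exchangeCoeff (-c) w (X.erase v) u i *
          exchangeCoeff c w ((X.erase v).erase i) u j) •
          betheVector T vac w (((X.erase v).erase i).erase j))
      = ∑ i ∈ X, ∑ j ∈ X.erase i,
        (lam2 (w i) * lam1 (w j) * (exchangeCoeff (-c) w X u i * (fC (-c) (w v) (w i))⁻¹) *
          (exchangeCoeff c w (X.erase i) u j * (fC c (w v) (w j))⁻¹)) •
          betheVector T vac w ((X.erase i).erase j) := by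
  rw [map_sum, ← Finset.sum_erase X (a := v) (by simp [fC_self])]
  refine Finset.sum_congr rfl fun i hi => ?_
  have hvi := (Finset.ne_of_mem_erase hi).symm
  have hvXi : v ∈ X.erase i := Finset.mem_erase.2 ⟨hvi, hv⟩
  rw [← hT.t01_sum_betheVector hvXi (by rw [fC_self, inv_zero, mul_zero, mul_zero]),
    Finset.erase_right_comm]
  congr 1
  refine Finset.sum_congr rfl fun j hj => ?_
  rw [h.neg.exchangeCoeff_erase hv hvi,
    h.exchangeCoeff_erase hvXi (Finset.ne_of_mem_erase hj).symm]

theorem t10_betheVector (hT : IsHighestWeight c T vac lam1 lam2) (h : NonResonant c w)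
    {X : Finset (Fin p)} {u : Fin p} (hu : u ∈ X) :
    T 1 0 (w u) (betheVector T vac w (X.erase u))
      = ∑ i ∈ X, ∑ j ∈ X.erase i,
        (lam2 (w i) * lam1 (w j) * exchangeCoeff (-c) w X u i *
          exchangeCoeff c w (X.erase i) u j) • betheVector T vac w ((X.erase i).erase j) := by
  induction X using Finset.strongInduction with
  | H X ih =>
  rcases (X.erase u).eq_empty_or_nonempty with hX | ⟨v, hv⟩
  · obtain rfl : X = {u} := by rw [← Finset.insert_erase hu, hX]; rfl
    simp [betheVector_empty, hT.t10_vac]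
  have hvX := Finset.mem_of_mem_erase hv
  have hvu := Finset.ne_of_mem_erase hv
  rw [← hT.t01_betheVector_erase hv, ← Module.End.mul_apply,
    hT.t10_mul_t01 (h.injective.ne hvu.symm), LinearMap.add_apply, LinearMap.smul_apply,
    LinearMap.sub_apply, Module.End.mul_apply, Module.End.mul_apply, Module.End.mul_apply,
    hT.t00_t11_betheVector h hu hvX hvu.symm, Finset.erase_right_comm,
    ih _ (Finset.erase_ssubset hvX) (Finset.mem_erase.2 ⟨hvu.symm, hu⟩),
    hT.t01_sum_sum_betheVector h hvX, hT.t00_t11_betheVector h hvX hu hvu]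
  simp only [Finset.smul_sum, ← Finset.sum_sub_distrib, ← Finset.sum_add_distrib, smul_smul,
    ← sub_smul, ← add_smul]
  refine Finset.sum_congr rfl fun i _ => Finset.sum_congr rfl fun j _ => ?_
  congr 1
  have h₁ := h.sub_add_ne_zero u j
  have h₂ := h.sub_add_ne_zero v j
  have h₃ := h.sub_ne_zero hvu.symm
  have h₄ := h.sub_add_ne_zero i u
  have h₅ := h.sub_add_ne_zero i v
  simp only [exchangeCoeff, hC_neg, fC_neg, inv_hC, inv_fC, gC]
  field_simp
  ring

end IsHighestWeight

end Operators

section Partitions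

variable {ι : Type*} [DecidableEq ι] {c : ℂ} {w : ι → ℂ}

/-- The interaction factor `f(w̄_I, w̄_J) f(w̄_I, w̄_K) f(w̄_K, w̄_J)` of a partition
`w̄_X ⇒ {w̄_I, w̄_J, w̄_K}`. It vanishes when `I` and `J` overlap. -/
def splitProd (c : ℂ) (w : ι → ℂ) (X I J : Finset ι) : ℂ :=
  fProd c w I J * fProd c w I (X \ (I ∪ J)) * fProd c w (X \ (I ∪ J)) J

theorem splitProd_eq_zero {X I J : Finset ι} {k : ι} (hI : k ∈ I) (hJ : k ∈ J) :
    splitProd c w X I J = 0 := by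
  rw [splitProd, fProd_eq_zero hI hJ, zero_mul, zero_mul]

theorem NonResonant.peelCoeff_mul_splitProd (h : NonResonant c w) {X I J : Finset ι}
    {x i j : ι} (hx : x ∈ X \ (I ∪ J)) (hi : i ∈ X \ (I ∪ J)) (hj : j ∈ (X \ (I ∪ J)).erase i) :
    peelCoeff c w x (insert i I) i * peelCoeff (-c) w x (insert j J) j *
        splitProd c w X (insert i I) (insert j J)
      = splitProd c w (X.erase x) I J *
        (exchangeCoeff (-c) w (X \ (I ∪ J)) x i *
          exchangeCoeff c w ((X \ (I ∪ J)).erase i) x j) := by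
  have hR : X \ (insert i I ∪ insert j J) = ((X \ (I ∪ J)).erase i).erase j := by grind
  have hZ : X.erase x \ (I ∪ J) = (X \ (I ∪ J)).erase x := Finset.erase_sdiff_comm X _ x
  have hiI : i ∉ I := by grind
  have hjJ : j ∉ J := by grind
  have hIx : fProd c w I {x} ≠ 0 := h.fProd_ne_zero (Finset.disjoint_singleton_right.2 (by grind))
  have hxJ : fProd c w {x} J ≠ 0 := h.fProd_ne_zero (Finset.disjoint_singleton_left.2 (by grind))
  rw [splitProd, splitProd, hR, hZ]
  generalize X \ (I ∪ J) = Y at *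
  set R := (Y.erase i).erase j
  have hY : insert x (Y.erase x) = insert i (insert j R) := by
    rw [Finset.insert_erase hx, Finset.insert_erase hj, Finset.insert_erase hi]
  have hYi : Y.erase i = insert j R := (Finset.insert_erase hj).symm
  have hjR : j ∉ R := Finset.notMem_erase j _
  have hiR : i ∉ insert j R := hYi ▸ Finset.notMem_erase i Y
  have hleft : fProd c w I {x} * fProd c w I (Y.erase x)
      = fProd c w I {i} * (fProd c w I {j} * fProd c w I R) := by
    rw [← fProd_insert_right _ (Finset.notMem_erase x Y), hY, fProd_insert_right _ hiR,
      fProd_insert_right _ hjR]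
  have hright : fProd c w {x} J * fProd c w (Y.erase x) J
      = fProd c w {i} J * (fProd c w {j} J * fProd c w R J) := by
    rw [← fProd_insert_left (Finset.notMem_erase x Y), hY, fProd_insert_left hiR,
      fProd_insert_left hjR]
  rw [mul_comm, ← eq_div_iff hIx] at hleft
  rw [mul_comm, ← eq_div_iff hxJ] at hright
  simp only [peelCoeff, exchangeCoeff, fProd_neg, hC_neg, Finset.erase_insert hiI,
    Finset.erase_insert hjJ, hYi, Finset.erase_insert hjR, fProd_insert_left hiI,
    fProd_insert_right _ hjJ, fProd_insert_right _ hjR, hleft, hright]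
  ring

theorem sum_powersetCard_succ_sum {M : Type*} [AddCommMonoid M] (n : ℕ) (X : Finset ι)
    (F : Finset ι → ι → M) :
    ∑ I ∈ X.powersetCard (n + 1), ∑ i ∈ I, F (I.erase i) i
      = ∑ I ∈ X.powersetCard n, ∑ i ∈ X \ I, F I i := by
  rw [Finset.sum_sigma', Finset.sum_sigma']
  refine Finset.sum_bij' (fun q _ => ⟨q.1.erase q.2, q.2⟩) (fun q _ => ⟨insert q.2 q.1, q.2⟩)
    ?_ ?_ ?_ ?_ fun _ _ => rfl
  all_goals
    rintro ⟨I, i⟩ hq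
    simp only [Finset.mem_sigma, Finset.mem_powersetCard, Finset.mem_sdiff] at hq ⊢
  · grind
  · grind
  · rw [Finset.insert_erase hq.2]
  · rw [Finset.erase_insert hq.2.2]

theorem NonResonant.sum_izergin_insert_smul {V : Type*} [AddCommGroup V] [Module ℂ V]
    (h : NonResonant c w) {U : Finset ι} {x : ι} (hx : x ∉ U) (X : Finset ι)
    (G : Finset ι → V) :
    ∑ I ∈ X.powersetCard (U.card + 1), izergin c w (insert x U) I • G I
      = ∑ I ∈ (X.erase x).powersetCard U.card, ∑ i ∈ X \ I,
        (peelCoeff c w x (insert i I) i * izergin c w U I) • G (insert i I) := by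
  have hpeel : ∀ I ∈ X.powersetCard (U.card + 1), izergin c w (insert x U) I • G I
      = ∑ i ∈ I, (peelCoeff c w x (insert i (I.erase i)) i * izergin c w U (I.erase i)) •
        G (insert i (I.erase i)) := by
    intro I hI
    rw [h.izergin_insert hx (Finset.mem_powersetCard.1 hI).2, Finset.sum_smul]
    exact Finset.sum_congr rfl fun i hi => by rw [Finset.insert_erase hi]
  rw [Finset.sum_congr rfl hpeel, sum_powersetCard_succ_sum U.card X fun I i =>
    (peelCoeff c w x (insert i I) i * izergin c w U I) • G (insert i I)]
  symm
  refine Finset.sum_subset (Finset.powersetCard_mono (Finset.erase_subset x X)) fun I hI hI' => ?_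
  have hxI : x ∈ I := by
    by_contra hxI
    rw [Finset.mem_powersetCard] at hI hI'
    exact hI' ⟨Finset.subset_erase.2 ⟨hI.1, hxI⟩, hI.2⟩
  refine Finset.sum_eq_zero fun i hi => ?_
  rw [peelCoeff, Finset.erase_insert (Finset.mem_sdiff.1 hi).2,
    fProd_eq_zero hxI (Finset.mem_singleton_self x)]
  simp

theorem NonResonant.sum_sum_izergin_insert_smul {V : Type*} [AddCommGroup V] [Module ℂ V]
    (h : NonResonant c w) {U : Finset ι} {x : ι} (hx : x ∉ U) (X : Finset ι)
    (G : Finset ι → Finset ι → V) :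
    ∑ I ∈ X.powersetCard (U.card + 1), ∑ J ∈ X.powersetCard (U.card + 1),
        (izergin c w (insert x U) I * izergin (-c) w (insert x U) J) • G I J
      = ∑ I ∈ (X.erase x).powersetCard U.card, ∑ J ∈ (X.erase x).powersetCard U.card,
        (izergin c w U I * izergin (-c) w U J) • ∑ i ∈ X \ I, ∑ j ∈ X \ J,
          (peelCoeff c w x (insert i I) i * peelCoeff (-c) w x (insert j J) j) •
            G (insert i I) (insert j J) := by
  simp only [mul_smul, ← Finset.smul_sum]
  simp only [h.neg.sum_izergin_insert_smul hx, h.sum_izergin_insert_smul hx]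
  refine Finset.sum_congr rfl fun I _ => ?_
  simp only [Finset.smul_sum]
  rw [Finset.sum_comm]
  refine Finset.sum_congr rfl fun J _ => Finset.sum_congr rfl fun i _ =>
    Finset.sum_congr rfl fun j _ => ?_
  module

end Partitions

section ScalarProducts

variable {V : Type*} [AddCommGroup V] [Module ℂ V] {p : ℕ} {c : ℂ} {w : Fin p → ℂ}
  {T : Fin 2 → Fin 2 → ℂ → Module.End ℂ V} {vac : V} {lam1 lam2 : ℂ → ℂ}

namespace IsHighestWeight

theorem splitProd_smul_t10_betheVector (hT : IsHighestWeight c T vac lam1 lam2)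
    (h : NonResonant c w) {X I J : Finset (Fin p)} {x : Fin p} (hx : x ∈ X \ (I ∪ J)) :
    splitProd c w (X.erase x) I J •
        T 1 0 (w x) (betheVector T vac w (X.erase x \ (I ∪ J)))
      = ∑ i ∈ X \ I, ∑ j ∈ X \ J, (lam2 (w i) * lam1 (w j) *
          (peelCoeff c w x (insert i I) i * peelCoeff (-c) w x (insert j J) j *
            splitProd c w X (insert i I) (insert j J))) •
          betheVector T vac w (X \ (insert i I ∪ insert j J)) := by
  have hzero {i j k : Fin p} (hI : k ∈ insert i I) (hJ : k ∈ insert j J) (a b : ℂ) :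
      (a * (b * splitProd c w X (insert i I) (insert j J))) •
        betheVector T vac w (X \ (insert i I ∪ insert j J)) = 0 := by
    rw [splitProd_eq_zero hI hJ, mul_zero, mul_zero, zero_smul]
  rw [Finset.erase_sdiff_comm, hT.t10_betheVector h hx, Finset.smul_sum]
  refine (Finset.sum_congr rfl fun i hi => ?_).trans
    (Finset.sum_subset (s₁ := X \ (I ∪ J)) (by grind) fun i hi hi' =>
      Finset.sum_eq_zero fun j _ =>
        hzero (Finset.mem_insert_self i I) (Finset.mem_insert_of_mem (by grind)) _ _)
  rw [Finset.smul_sum]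
  refine (Finset.sum_congr rfl fun j hj => ?_).trans
    (Finset.sum_subset (s₁ := (X \ (I ∪ J)).erase i) (by grind) fun j hj hj' =>
      hzero (by grind) (Finset.mem_insert_self j J) _ _)
  have hR : X \ (insert i I ∪ insert j J) = ((X \ (I ∪ J)).erase i).erase j := by grind
  rw [h.peelCoeff_mul_splitProd hx hi hj, hR, smul_smul]
  congr 1
  ring

theorem opProd_t10_betheVector (hT : IsHighestWeight c T vac lam1 lam2) (h : NonResonant c w)
    {X U : Finset (Fin p)} (hUX : U ⊆ X) :
    opProd (T 1 0) w U (betheVector T vac w (X \ U))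
      = ∑ I ∈ X.powersetCard U.card, ∑ J ∈ X.powersetCard U.card,
        (izergin c w U I * izergin (-c) w U J) •
          ((∏ i ∈ I, lam2 (w i)) * (∏ j ∈ J, lam1 (w j)) * splitProd c w X I J) •
            betheVector T vac w (X \ (I ∪ J)) := by
  induction U using Finset.induction_on generalizing X with
  | empty => simp [opProd_empty, izergin_empty, splitProd, fProd]
  | insert x U hx ih =>
    obtain ⟨hxX, hU⟩ := Finset.insert_subset_iff.1 hUX
    rw [opProd_insert (hT.commute 1 0) w hx, Module.End.mul_apply, Finset.card_insert_of_notMem hx,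
      h.sum_sum_izergin_insert_smul hx X, Finset.sdiff_insert, ← Finset.erase_sdiff_comm,
      ih (Finset.subset_erase.2 ⟨hU, hx⟩)]
    simp only [map_sum, map_smul]
    refine Finset.sum_congr rfl fun I hI => Finset.sum_congr rfl fun J hJ => ?_
    have hxI := (Finset.subset_erase.1 (Finset.mem_powersetCard.1 hI).1).2
    have hxJ := (Finset.subset_erase.1 (Finset.mem_powersetCard.1 hJ).1).2
    congr 1
    rw [mul_smul, hT.splitProd_smul_t10_betheVector h (by grind), Finset.smul_sum]
    refine Finset.sum_congr rfl fun i hi => ?_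
    rw [Finset.smul_sum]
    refine Finset.sum_congr rfl fun j hj => ?_
    rw [Finset.prod_insert (Finset.mem_sdiff.1 hi).2, Finset.prod_insert (Finset.mem_sdiff.1 hj).2]
    module

theorem map_betheVector_eq_zero {M : Type*} [AddCommGroup M] [Module ℂ M] {φ : V →ₗ[ℂ] M}
    (hT : IsHighestWeight c T vac lam1 lam2) (hφ : ∀ x y, φ (T 0 1 x y) = 0)
    {S : Finset (Fin p)} (hS : S.Nonempty) : φ (betheVector T vac w S) = 0 := by
  obtain ⟨i, hi⟩ := hS
  rw [← hT.t01_betheVector_erase hi, hφ]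

theorem map_opProd_t10_betheVector {M : Type*} [AddCommGroup M] [Module ℂ M] {φ : V →ₗ[ℂ] M}
    (hT : IsHighestWeight c T vac lam1 lam2) (hφ : ∀ x y, φ (T 0 1 x y) = 0)
    (h : NonResonant c w) {U : Finset (Fin p)} (hU : Uᶜ.card = U.card) :
    φ (opProd (T 1 0) w U (betheVector T vac w Uᶜ))
      = (∑ I ∈ Finset.univ.powersetCard U.card,
        (∏ i ∈ I, lam2 (w i)) * (∏ i ∈ Iᶜ, lam1 (w i)) * izergin c w U I *
          izergin (-c) w U Iᶜ * fProd c w I Iᶜ) • φ vac := by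
  rw [Finset.compl_eq_univ_sdiff, hT.opProd_t10_betheVector h (Finset.subset_univ U), map_sum,
    Finset.sum_smul]
  refine Finset.sum_congr rfl fun I hI => ?_
  have hIc : Iᶜ.card = U.card := by
    have h₁ := Finset.card_add_card_compl I
    have h₂ := Finset.card_add_card_compl U
    have h₃ := (Finset.mem_powersetCard.1 hI).2
    lia
  rw [map_sum, Finset.sum_eq_single_of_mem Iᶜ
    (Finset.mem_powersetCard.2 ⟨Finset.subset_univ _, hIc⟩)]
  · rw [map_smul, map_smul, splitProd, Finset.union_compl, Finset.sdiff_self, betheVector_empty,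
      fProd_empty_left, fProd_empty_right]
    module
  · intro J hJ hJI
    have hIJ : (Finset.univ \ (I ∪ J)).Nonempty := by
      rw [← Finset.sup_eq_union, ← sdiff_sdiff_left, ← Finset.compl_eq_univ_sdiff,
        Finset.sdiff_nonempty]
      exact fun hsub => hJI (Finset.eq_of_subset_of_card_le hsub
        (by rw [hIc, (Finset.mem_powersetCard.1 hJ).2])).symm
    rw [map_smul, map_smul, hT.map_betheVector_eq_zero hφ hIJ, smul_zero, smul_zero]

end IsHighestWeight

theorem stmt0_general {M : Type*} [AddCommGroup M] [Module ℂ M]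
    (hT : IsHighestWeight c T vac lam1 lam2) (φ : V →ₗ[ℂ] M) (hφ : ∀ x y, φ (T 0 1 x y) = 0)
    (n : ℕ) (u v : Fin n → ℂ) (h : NonResonant c (Fin.append u v)) :
    φ ((opProd (T 1 0) u Finset.univ * opProd (T 0 1) v Finset.univ) vac)
      = (∑ s ∈ Finset.powersetCard n (Finset.univ : Finset (Fin (n + n))),
          (∏ i ∈ s, lam2 (Fin.append u v i)) *
            (∏ i ∈ sᶜ, lam1 (Fin.append u v i)) *
            KIz c 1 u (fun i => restr (Fin.append u v) s i + c) *
            KIzBar c 1 u (fun i => restr (Fin.append u v) sᶜ i - c) *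
            fSS c (Fin.append u v) s sᶜ) • φ vac := by
  let U : Finset (Fin (n + n)) := Finset.univ.map (Fin.castAddEmb n)
  have hUcard : U.card = n := by simp [U]
  have hUcompl : Uᶜ = Finset.univ.map (Fin.natAddEmb n) := by
    ext i
    induction i using Fin.addCases <;> simp [U, Fin.ext_iff] <;> lia
  have hu : u = Fin.append u v ∘ Fin.castAddEmb n := funext fun i => (Fin.append_left u v i).symm
  have hv : v = Fin.append u v ∘ Fin.natAddEmb n := funext fun i => (Fin.append_right u v i).symm
  have hK (s : Finset (Fin (n + n))) :
      KIz c 1 u (fun i => restr (Fin.append u v) s i + c) = izergin c (Fin.append u v) U s := by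
    rw [← h.KIz_eq_izergin, ← hu]
    rfl
  have hKbar (s : Finset (Fin (n + n))) :
      KIzBar c 1 u (fun i => restr (Fin.append u v) s i - c)
        = izergin (-c) (Fin.append u v) U s := by
    rw [← h.neg.KIz_eq_izergin, ← hu]
    rfl
  have hmain := hT.map_opProd_t10_betheVector hφ h (U := U) (by rw [hUcompl]; simp [U])
  rw [hUcard, hUcompl, betheVector, opProd_map (hT.commute 1 0), opProd_map (hT.commute 0 1), ← hu,
    ← hv] at hmain
  simp only [hK, hKbar]
  exact hmain

end ScalarProducts

/-- Scalar product of Bethe vectors as a sum over partitions of the combined tuple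
`w̄ = {ū, v̄}` into two subtuples of cardinality `n` (Theorem `SC` of the paper). -/
theorem stmt0
    (c : ℂ) (hc : c ≠ 0)
    (V : Type*) [AddCommGroup V] [Module ℂ V]
    (T : Fin 2 → Fin 2 → ℂ → Module.End ℂ V)
    (vac : V) (lam1 lam2 : ℂ → ℂ) (vacDual : V →ₗ[ℂ] ℂ)
    (hYang : ∀ (i j k l : Fin 2) (x y : ℂ), x ≠ y →
      T i j x * T k l y - T k l y * T i j x
        = gC c x y • (T k j y * T i l x - T k j x * T i l y))
    (hCommSame : ∀ (i j : Fin 2) (x y : ℂ), T i j x * T i j y = T i j y * T i j x)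
    (hvac11 : ∀ x : ℂ, T 0 0 x vac = lam1 x • vac)
    (hvac22 : ∀ x : ℂ, T 1 1 x vac = lam2 x • vac)
    (hvac21 : ∀ x : ℂ, T 1 0 x vac = 0)
    (hdual11 : ∀ (x : ℂ) (y : V), vacDual (T 0 0 x y) = lam1 x * vacDual y)
    (hdual22 : ∀ (x : ℂ) (y : V), vacDual (T 1 1 x y) = lam2 x * vacDual y)
    (hdual12 : ∀ (x : ℂ) (y : V), vacDual (T 0 1 x y) = 0)
    (hnorm : vacDual vac = 1)
    (n : ℕ) (u v : Fin n → ℂ)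
    (hgen : Generic c (Fin.append u v)) :
    vacDual ((opProd (T 1 0) u Finset.univ * opProd (T 0 1) v Finset.univ) vac)
      = ∑ s ∈ Finset.powersetCard n (Finset.univ : Finset (Fin (n + n))),
          (∏ i ∈ s, lam2 (Fin.append u v i)) *
            (∏ i ∈ sᶜ, lam1 (Fin.append u v i)) *
            KIz c 1 u (fun i => restr (Fin.append u v) s i + c) *
            KIzBar c 1 u (fun i => restr (Fin.append u v) sᶜ i - c) *
            fSS c (Fin.append u v) s sᶜ := by
  have hT : IsHighestWeight c T vac lam1 lam2 := ⟨hYang, hCommSame, hvac11, hvac22, hvac21⟩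
  rw [stmt0_general hT vacDual hdual12 n u v (hgen.nonResonant hc), hnorm, smul_eq_mul, mul_one]
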